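/- Let X be a complex Banach space and T ∈ L(X). The following are equivalent: (1) T is a weak B-Fredholm operator, i.e. there exists P ∈ L(X) with P² − P compact, PT − TP compact, (PT)ᵐ compact for some integer m ≥ 1, and there exists W ∈ L(X) with W(T + P) − I and (T + P)W − I compact; (2) T is both a left and a right weak semi-B-Fredholm operator, i.e. there exist P₁ ∈ L(X) with P₁² − P₁ compact, P₁T − TP₁ compact, (P₁T)ⁿ compact for some n ≥ 1, and S₁ ∈ L(X) with S₁P₁ − P₁S₁ compact and S₁(T + P₁) − I compact, and there exist P₂ ∈ L(X) with P₂² − P₂ compact, P₂T − TP₂ compact, (P₂T)ᵏ compact for some k ≥ 1, and S₂ ∈ L(X) with S₂P₂ − P₂S₂ compact and (T + P₂)S₂ − I compact. -/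

import Mathlib

/-!
An operator is compact exactly when it vanishes in the Calkin ring, so the theorem is a statement
about an element `t` of a ring. Let `p` and `q` be idempotents commuting with `t` such that
`p * t` and `q * t` are nilpotent, whence `p * t ^ n = 0` and `t ^ n * q = 0` for large `n`. Since
`t + p` agrees with `t` on the range of `1 - p`, we get
`(t + p) ^ n * ((1 - p) * q) = (1 - p) * (t ^ n * q) = 0`; if `t + p` is left invertible this gives
`q = p * q`. Dually, right invertibility of `t + q` gives `p = p * q`. Hence `p = q`, and `t + p` is
invertible on both sides.
-/

theorem exists_one_le_pow_eq_zero_iff_isNilpotent {M : Type*} [MonoidWithZero M] {x : M} :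
    (∃ n : ℕ, 1 ≤ n ∧ x ^ n = 0) ↔ IsNilpotent x :=
  ⟨fun ⟨n, _, hn⟩ ↦ ⟨n, hn⟩, fun ⟨n, hn⟩ ↦ ⟨n + 1, n.succ_pos, by rw [pow_succ, hn, zero_mul]⟩⟩

section Ring

variable {A : Type*} [Ring A] {t p q : A}

theorem semiconjBy_one_sub_self_add (hp : IsIdempotentElem p) (hpt : Commute p t) :
    SemiconjBy (1 - p) t (t + p) := by
  rw [SemiconjBy, add_mul, hp.mul_one_sub_self, add_zero]
  exact ((Commute.one_left t).sub_left hpt).eq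

theorem semiconjBy_one_sub_add_self (hp : IsIdempotentElem p) (hpt : Commute p t) :
    SemiconjBy (1 - p) (t + p) t := by
  rw [SemiconjBy, mul_add, hp.one_sub_mul_self, add_zero]
  exact ((Commute.one_left t).sub_left hpt).eq

theorem commute_inv_of_eq_add {u : Aˣ} (hpt : Commute p t) (hu : ↑u = t + p) :
    Commute (↑u⁻¹ : A) p :=
  (hu ▸ hpt.symm.add_left (Commute.refl p) : Commute (u : A) p).units_inv_left

/-- The conditions on `p` common to all the Drazin-type notions below: `p` is an idempotent
commuting with `t` and annihilating `t` up to a nilpotent. -/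
structure IsNilCommutingIdempotent (t p : A) : Prop where
  isIdempotentElem : IsIdempotentElem p
  commute : Commute p t
  isNilpotent : IsNilpotent (p * t)

/-- Drazin invertibility, in its characterization through the spectral idempotent `p` of `t`
rather than through the Drazin inverse. -/
def IsDrazinInvertible (t : A) : Prop :=
  ∃ p, IsNilCommutingIdempotent t p ∧ IsUnit (t + p)

/-- Left Drazin invertibility: `t + p` is only required to have a left inverse, but one which
commutes with `p`. -/
def IsLeftDrazinInvertible (t : A) : Prop :=
  ∃ p, IsNilCommutingIdempotent t p ∧ ∃ s, Commute s p ∧ s * (t + p) = 1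

/-- Right Drazin invertibility: `t + p` is only required to have a right inverse, but one which
commutes with `p`. -/
def IsRightDrazinInvertible (t : A) : Prop :=
  ∃ p, IsNilCommutingIdempotent t p ∧ ∃ s, Commute s p ∧ (t + p) * s = 1

namespace IsNilCommutingIdempotent

theorem exists_mul_pow_eq_zero (hp : IsNilCommutingIdempotent t p) : ∃ n : ℕ, p * t ^ n = 0 := by
  obtain ⟨n, hn⟩ := hp.isNilpotent
  refine ⟨n, ?_⟩
  calc p * t ^ n = p ^ (n + 1) * t ^ n := by rw [hp.isIdempotentElem.pow_succ_eq]
    _ = p * (p * t) ^ n := by rw [hp.commute.mul_pow, pow_succ', mul_assoc]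
    _ = 0 := by rw [hn, mul_zero]

theorem mul_eq_right_of_isLeftRegular (hq : IsNilCommutingIdempotent t q)
    (hp : IsIdempotentElem p) (hpt : Commute p t) (hreg : IsLeftRegular (t + p)) : p * q = q := by
  obtain ⟨n, hn⟩ := hq.exists_mul_pow_eq_zero
  have pow_mul_eq_zero : (t + p) ^ n * ((1 - p) * q) = 0 := by
    rw [← mul_assoc, ← ((semiconjBy_one_sub_self_add hp hpt).pow_right n).eq, mul_assoc,
      ← (hq.commute.pow_right n).eq, hn, mul_zero]
  have one_sub_mul_eq_zero : (1 - p) * q = 0 :=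
    hreg.pow n (pow_mul_eq_zero.trans (mul_zero _).symm)
  rwa [sub_mul, one_mul, sub_eq_zero, eq_comm] at one_sub_mul_eq_zero

theorem mul_eq_left_of_isRightRegular (hp : IsNilCommutingIdempotent t p)
    (hq : IsIdempotentElem q) (hqt : Commute q t) (hreg : IsRightRegular (t + q)) : p * q = p := by
  obtain ⟨n, hn⟩ := hp.exists_mul_pow_eq_zero
  have mul_pow_eq_zero : p * (1 - q) * (t + q) ^ n = 0 := by
    rw [mul_assoc, ((semiconjBy_one_sub_add_self hq hqt).pow_right n).eq, ← mul_assoc, hn,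
      zero_mul]
  have mul_one_sub_eq_zero : p * (1 - q) = 0 :=
    hreg.pow n (mul_pow_eq_zero.trans (zero_mul _).symm)
  rwa [mul_sub, mul_one, sub_eq_zero, eq_comm] at mul_one_sub_eq_zero

theorem eq_of_isLeftRegular_of_isRightRegular (hp : IsNilCommutingIdempotent t p)
    (hq : IsNilCommutingIdempotent t q) (hl : IsLeftRegular (t + p))
    (hr : IsRightRegular (t + q)) : p = q :=
  calc p = p * q := (hp.mul_eq_left_of_isRightRegular hq.isIdempotentElem hq.commute hr).symm
    _ = q := hq.mul_eq_right_of_isLeftRegular hp.isIdempotentElem hp.commute hl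

end IsNilCommutingIdempotent

theorem IsDrazinInvertible.left (ht : IsDrazinInvertible t) : IsLeftDrazinInvertible t := by
  obtain ⟨p, hp, u, hu⟩ := ht
  exact ⟨p, hp, ↑u⁻¹, commute_inv_of_eq_add hp.commute hu, hu ▸ u.inv_mul⟩

theorem IsDrazinInvertible.right (ht : IsDrazinInvertible t) : IsRightDrazinInvertible t := by
  obtain ⟨p, hp, u, hu⟩ := ht
  exact ⟨p, hp, ↑u⁻¹, commute_inv_of_eq_add hp.commute hu, hu ▸ u.mul_inv⟩

theorem IsDrazinInvertible.of_left_of_right (hl : IsLeftDrazinInvertible t)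
    (hr : IsRightDrazinInvertible t) : IsDrazinInvertible t := by
  obtain ⟨p, hp, s, -, hs⟩ := hl
  obtain ⟨q, hq, r, -, htr⟩ := hr
  obtain rfl : p = q := hp.eq_of_isLeftRegular_of_isRightRegular hq
    (isLeftRegular_of_mul_eq_one hs) (isRightRegular_of_mul_eq_one htr)
  exact ⟨p, hp, isUnit_iff_exists_and_exists.mpr ⟨⟨r, htr⟩, ⟨s, hs⟩⟩⟩

theorem isDrazinInvertible_iff_left_and_right :
    IsDrazinInvertible t ↔ IsLeftDrazinInvertible t ∧ IsRightDrazinInvertible t :=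
  ⟨fun ht ↦ ⟨ht.left, ht.right⟩, fun ht ↦ IsDrazinInvertible.of_left_of_right ht.1 ht.2⟩

end Ring

section Calkin

variable {R X : Type*} [Ring R] [AddCommGroup X] [TopologicalSpace X] [IsTopologicalAddGroup X]
  [Module R X]

variable (R X) in
/-- The ideal of compact operators in the ring of continuous endomorphisms of `X`. -/
def compactOperatorIdeal : Ideal (X →L[R] X) where
  carrier := {f | IsCompactOperator f}
  add_mem' hf hg := IsCompactOperator.add hf hg
  zero_mem' := isCompactOperator_zero
  smul_mem' g _ hf := IsCompactOperator.clm_comp hf g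

instance : (compactOperatorIdeal R X).IsTwoSided :=
  ⟨fun g hf ↦ IsCompactOperator.comp_clm hf g⟩

variable (R X) in
/-- The Calkin ring: continuous endomorphisms of `X` modulo compact ones. -/
abbrev CalkinRing : Type _ := (X →L[R] X) ⧸ compactOperatorIdeal R X

variable (R X) in
/-- The canonical projection `Π` onto the Calkin ring. -/
abbrev toCalkin : (X →L[R] X) →+* CalkinRing R X := Ideal.Quotient.mk (compactOperatorIdeal R X)

theorem toCalkin_surjective : Function.Surjective (toCalkin R X) := Ideal.Quotient.mk_surjective

theorem isCompactOperator_iff_toCalkin_eq_zero {f : X →L[R] X} :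
    IsCompactOperator f ↔ toCalkin R X f = 0 :=
  (Ideal.Quotient.eq_zero_iff_mem (I := compactOperatorIdeal R X)).symm

/-- Weak B-Fredholm operators; the witness `W` is an inverse of `T + P` modulo compact operators. -/
def IsWeakBFredholm (T : X →L[R] X) : Prop :=
  ∃ P : X →L[R] X, IsCompactOperator ⇑(P * P - P) ∧ IsCompactOperator ⇑(P * T - T * P) ∧
    (∃ m : ℕ, 1 ≤ m ∧ IsCompactOperator ⇑((P * T) ^ m)) ∧
    ∃ W : X →L[R] X, IsCompactOperator ⇑(W * (T + P) - 1) ∧ IsCompactOperator ⇑((T + P) * W - 1)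

/-- Left weak semi-B-Fredholm operators; the witness `S` is a left inverse of `T + P` and commutes
with `P`, both modulo compact operators. -/
def IsLeftWeakSemiBFredholm (T : X →L[R] X) : Prop :=
  ∃ P : X →L[R] X, IsCompactOperator ⇑(P * P - P) ∧ IsCompactOperator ⇑(P * T - T * P) ∧
    (∃ n : ℕ, 1 ≤ n ∧ IsCompactOperator ⇑((P * T) ^ n)) ∧
    ∃ S : X →L[R] X, IsCompactOperator ⇑(S * P - P * S) ∧ IsCompactOperator ⇑(S * (T + P) - 1)

/-- Right weak semi-B-Fredholm operators; the witness `S` is a right inverse of `T + P` and commutes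
with `P`, both modulo compact operators. -/
def IsRightWeakSemiBFredholm (T : X →L[R] X) : Prop :=
  ∃ P : X →L[R] X, IsCompactOperator ⇑(P * P - P) ∧ IsCompactOperator ⇑(P * T - T * P) ∧
    (∃ k : ℕ, 1 ≤ k ∧ IsCompactOperator ⇑((P * T) ^ k)) ∧
    ∃ S : X →L[R] X, IsCompactOperator ⇑(S * P - P * S) ∧ IsCompactOperator ⇑((T + P) * S - 1)

theorem isNilCommutingIdempotent_toCalkin_iff {T P : X →L[R] X} :
    IsNilCommutingIdempotent (toCalkin R X T) (toCalkin R X P) ↔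
      IsCompactOperator ⇑(P * P - P) ∧ IsCompactOperator ⇑(P * T - T * P) ∧
        ∃ n : ℕ, 1 ≤ n ∧ IsCompactOperator ⇑((P * T) ^ n) := by
  simp only [isCompactOperator_iff_toCalkin_eq_zero, map_sub, map_mul, map_pow, sub_eq_zero,
    exists_one_le_pow_eq_zero_iff_isNilpotent]
  exact ⟨fun h ↦ ⟨h.1, h.2, h.3⟩, fun h ↦ ⟨h.1, h.2.1, h.2.2⟩⟩

theorem isWeakBFredholm_iff_isDrazinInvertible_toCalkin {T : X →L[R] X} :
    IsWeakBFredholm T ↔ IsDrazinInvertible (toCalkin R X T) := by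
  simp only [IsWeakBFredholm, IsDrazinInvertible, toCalkin_surjective.exists,
    isNilCommutingIdempotent_toCalkin_iff, isUnit_iff_exists,
    isCompactOperator_iff_toCalkin_eq_zero, map_sub, map_mul, map_add, map_one, sub_eq_zero,
    and_assoc, and_comm (a := _ * (_ + _) = _)]

theorem isLeftWeakSemiBFredholm_iff_isLeftDrazinInvertible_toCalkin {T : X →L[R] X} :
    IsLeftWeakSemiBFredholm T ↔ IsLeftDrazinInvertible (toCalkin R X T) := by
  simp only [IsLeftWeakSemiBFredholm, IsLeftDrazinInvertible, toCalkin_surjective.exists,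
    isNilCommutingIdempotent_toCalkin_iff, commute_iff_eq,
    isCompactOperator_iff_toCalkin_eq_zero, map_sub, map_mul, map_add, map_one, sub_eq_zero,
    and_assoc]

theorem isRightWeakSemiBFredholm_iff_isRightDrazinInvertible_toCalkin {T : X →L[R] X} :
    IsRightWeakSemiBFredholm T ↔ IsRightDrazinInvertible (toCalkin R X T) := by
  simp only [IsRightWeakSemiBFredholm, IsRightDrazinInvertible, toCalkin_surjective.exists,
    isNilCommutingIdempotent_toCalkin_iff, commute_iff_eq,
    isCompactOperator_iff_toCalkin_eq_zero, map_sub, map_mul, map_add, map_one, sub_eq_zero,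
    and_assoc]

theorem weak_B_Fredholm_iff_left_and_right_general (T : X →L[R] X) :
    IsWeakBFredholm T ↔ IsLeftWeakSemiBFredholm T ∧ IsRightWeakSemiBFredholm T := by
  rw [isWeakBFredholm_iff_isDrazinInvertible_toCalkin,
    isLeftWeakSemiBFredholm_iff_isLeftDrazinInvertible_toCalkin,
    isRightWeakSemiBFredholm_iff_isRightDrazinInvertible_toCalkin]
  exact isDrazinInvertible_iff_left_and_right

end Calkin

/-- **Weak B-Fredholm = left weak semi-B-Fredholm ∧ right weak semi-B-Fredholm.**
`T` is weak B-Fredholm (i.e. `Π(T)` is Drazin invertible in the Calkin algebra) if and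
only if it is both a left and a right weak semi-B-Fredholm operator. -/
theorem weak_B_Fredholm_iff_left_and_right
    {X : Type*} [NormedAddCommGroup X] [NormedSpace ℂ X] [CompleteSpace X]
    (T : X →L[ℂ] X) :
    (∃ P : X →L[ℂ] X, IsCompactOperator ⇑(P * P - P) ∧ IsCompactOperator ⇑(P * T - T * P) ∧
        (∃ m : ℕ, 1 ≤ m ∧ IsCompactOperator ⇑((P * T) ^ m)) ∧
        ∃ W : X →L[ℂ] X, IsCompactOperator ⇑(W * (T + P) - 1) ∧
          IsCompactOperator ⇑((T + P) * W - 1)) ↔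
    ((∃ P₁ : X →L[ℂ] X, IsCompactOperator ⇑(P₁ * P₁ - P₁) ∧
        IsCompactOperator ⇑(P₁ * T - T * P₁) ∧
        (∃ n : ℕ, 1 ≤ n ∧ IsCompactOperator ⇑((P₁ * T) ^ n)) ∧
        ∃ S₁ : X →L[ℂ] X, IsCompactOperator ⇑(S₁ * P₁ - P₁ * S₁) ∧
          IsCompactOperator ⇑(S₁ * (T + P₁) - 1)) ∧
      (∃ P₂ : X →L[ℂ] X, IsCompactOperator ⇑(P₂ * P₂ - P₂) ∧
        IsCompactOperator ⇑(P₂ * T - T * P₂) ∧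
        (∃ k : ℕ, 1 ≤ k ∧ IsCompactOperator ⇑((P₂ * T) ^ k)) ∧
        ∃ S₂ : X →L[ℂ] X, IsCompactOperator ⇑(S₂ * P₂ - P₂ * S₂) ∧
          IsCompactOperator ⇑((T + P₂) * S₂ - 1))) :=
  weak_B_Fredholm_iff_left_and_right_general T
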